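/- If λ₁, λ₂, λ₃ are roots of unity satisfying (λ₁ + λ₁*) + (λ₂ + λ₂*) + (λ₃ + λ₃*) + 2 = 0, then up to permutation and complex conjugation, (λ₁, λ₂, λ₃) equals (i, ω, ω), or (ω, β, β²), or (−1, λ, −λ) for some root of unity λ, where ω = e^{2πi/3} and β = e^{2πi/5}. -/

import Mathlib

open Complex

noncomputable def ω : ℂ := Complex.exp (2 * Real.pi * Complex.I / 3)
noncomputable def β : ℂ := Complex.exp (2 * Real.pi * Complex.I / 5)

def IsRootOfUnity (z : ℂ) : Prop := ∃ n : ℕ, 0 < n ∧ z ^ n = 1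

/-!
The primitive `n`-th roots of unity have mean `μ(n) / φ(n)`, and the normalized trace over `ℚ`
replaces each root of unity in a rational linear relation by the mean of its conjugates. Here the
three means add up to `-1`. The mean is at least `-1/6` unless `n` is `2`, `3` or `5`, where it is
`-1`, `-1/2` and `-1/4`; so one of the orders is `2`, or two of them are `3`, or one is `3` and
another is `5`. In each case the real parts are then forced, and a number on the unit circle is
determined up to conjugation by its real part.
-/

section Cyclotomic

open Polynomial ArithmeticFunction
open scoped ArithmeticFunction.zeta ArithmeticFunction.Moebius

theorem nextCoeff_X_pow_sub_one {R : Type*} [Ring R] [Nontrivial R] {n : ℕ} (hn : n ≠ 0) :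
    (X ^ n - 1 : R[X]).nextCoeff = if n = 1 then -1 else 0 := by
  have hdeg : (X ^ n - 1 : R[X]).natDegree = n := natDegree_X_pow_sub_C
  rw [nextCoeff_of_natDegree_pos (by lia), hdeg, coeff_sub, coeff_X_pow, coeff_one]
  by_cases h : n = 1
  · simp [h]
  · simp [h, show n - 1 ≠ n by lia, show n - 1 ≠ 0 by lia]

theorem nextCoeff_cyclotomic (n : ℕ) (R : Type*) [CommRing R] :
    (cyclotomic n R).nextCoeff = -(μ n : R) := by
  nontriviality R
  let f : ArithmeticFunction R := ⟨fun n ↦ (cyclotomic n R).nextCoeff, by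
    simpa using nextCoeff_C_eq_zero (1 : R)⟩
  have zeta_mul_f : (ζ : ArithmeticFunction R) * f = -1 := by
    ext m
    rcases eq_or_ne m 0 with rfl | hm
    · simp
    · rw [coe_zeta_mul_apply, ArithmeticFunction.neg_apply, one_apply]
      calc ∑ d ∈ m.divisors, (cyclotomic d R).nextCoeff
          = (∏ d ∈ m.divisors, cyclotomic d R).nextCoeff :=
            (Monic.nextCoeff_prod _ _ fun d _ ↦ cyclotomic.monic d R).symm
        _ = (X ^ m - 1 : R[X]).nextCoeff := by
            rw [prod_cyclotomic_eq_X_pow_sub_one (Nat.pos_of_ne_zero hm)]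
        _ = -(if m = 1 then 1 else 0) := by
            rw [nextCoeff_X_pow_sub_one hm]
            split <;> simp
  have f_eq : f = -(μ : ArithmeticFunction R) := calc
    f = (μ : ArithmeticFunction R) * ζ * f := by rw [coe_moebius_mul_coe_zeta, one_mul]
    _ = -(μ : ArithmeticFunction R) := by rw [mul_assoc, zeta_mul_f, mul_neg, mul_one]
  calc (cyclotomic n R).nextCoeff = f n := rfl
    _ = -(μ n : R) := by rw [f_eq, ArithmeticFunction.neg_apply, intCoe_apply]

end Cyclotomic

/-- The mean `μ(n) / φ(n)` of the primitive `n`-th roots of unity. -/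
noncomputable def primitiveRootMean (n : ℕ) : ℚ :=
  (ArithmeticFunction.moebius n : ℚ) / n.totient

theorem primitiveRootMean_one : primitiveRootMean 1 = 1 := by
  simp [primitiveRootMean]

theorem primitiveRootMean_prime {p : ℕ} (hp : p.Prime) :
    primitiveRootMean p = -1 / (p - 1) := by
  rw [primitiveRootMean, ArithmeticFunction.moebius_apply_prime hp, Nat.totient_prime hp,
    Nat.cast_pred hp.pos]
  norm_num

theorem normalizedTrace_of_isPrimitiveRoot {K : Type*} [Field K] [CharZero K]
    [Algebra.IsIntegral ℚ K] {ζ : K} {n : ℕ} (hn : 0 < n) (hζ : IsPrimitiveRoot ζ n) :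
    Algebra.normalizedTrace ℚ K ζ = primitiveRootMean n := by
  rw [Algebra.normalizedTrace_minpoly, ← Polynomial.cyclotomic_eq_minpoly_rat hζ hn,
    nextCoeff_cyclotomic, Polynomial.natDegree_cyclotomic, primitiveRootMean]
  simp [div_eq_inv_mul]

theorem exists_linearMap_eq_primitiveRootMean (L : Type*) [Field L] [CharZero L] :
    ∃ τ : L →ₗ[ℚ] ℚ, ∀ ζ : L, IsOfFinOrder ζ → τ ζ = primitiveRootMean (orderOf ζ) := by
  let K := algebraicClosure ℚ L
  have : Algebra.IsIntegral ℚ K :=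
    Algebra.isAlgebraic_iff_isIntegral.mp (algebraicClosure.isAlgebraic ℚ L)
  let normTrace : K →ₗ[ℚ] ℚ := Algebra.normalizedTrace ℚ K
  obtain ⟨τ, hτ⟩ := LinearMap.exists_extend (p := K.toSubalgebra.toSubmodule) normTrace
  refine ⟨τ, fun ζ hζ ↦ ?_⟩
  have hmem : ζ ∈ K := mem_algebraicClosure_iff.mpr
    ((IsPrimitiveRoot.orderOf ζ).isIntegral hζ.orderOf_pos).tower_top.isAlgebraic
  have hprim : IsPrimitiveRoot (⟨ζ, hmem⟩ : K) (orderOf ζ) :=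
    (IsPrimitiveRoot.orderOf ζ).of_map_of_injective (f := K.val) K.val.injective
  calc τ ζ = normTrace ⟨ζ, hmem⟩ := LinearMap.congr_fun hτ ⟨ζ, hmem⟩
    _ = primitiveRootMean (orderOf ζ) := normalizedTrace_of_isPrimitiveRoot hζ.orderOf_pos hprim

theorem sum_primitiveRootMean_orderOf_eq {ι : Type*} {s : Finset ι} {z : ι → ℂ} {c : ℚ}
    (hz : ∀ i ∈ s, IsOfFinOrder (z i)) (hsum : ∑ i ∈ s, (z i).re = c) :
    ∑ i ∈ s, primitiveRootMean (orderOf (z i)) = c := by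
  obtain ⟨τ, hτ⟩ := exists_linearMap_eq_primitiveRootMean ℂ
  let conj : ℂ →* ℂ := starRingEnd ℂ
  have relation : ∑ i ∈ s, (z i + conj (z i)) = (2 * c) • (1 : ℂ) := calc
    ∑ i ∈ s, (z i + conj (z i)) = ∑ i ∈ s, ((2 * (z i).re : ℝ) : ℂ) :=
      Finset.sum_congr rfl fun i _ ↦ add_conj (z i)
    _ = (2 * c) • (1 : ℂ) := by
      rw [← ofReal_sum, ← Finset.mul_sum, hsum, Rat.smul_one_eq_cast]
      push_cast
      rfl
  have τ_pair (i : ι) (hi : i ∈ s) :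
      τ (z i + conj (z i)) = 2 * primitiveRootMean (orderOf (z i)) := by
    rw [map_add, hτ _ (hz i hi), hτ _ (conj.isOfFinOrder (hz i hi)),
      orderOf_injective conj (starRingEnd ℂ).injective, two_mul]
  have h := congrArg τ relation
  rw [map_sum, Finset.sum_congr rfl τ_pair, ← Finset.mul_sum, map_smul, hτ 1 IsOfFinOrder.one,
    orderOf_one, primitiveRootMean_one, smul_eq_mul, mul_one] at h
  linarith

theorem dvd_thirty_of_totient_lt_six {n : ℕ} (hsq : Squarefree n) (h : n.totient < 6) :
    n ∣ 30 := by
  have hsub : n.primeFactors ⊆ {2, 3, 5} := by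
    intro p hp
    have hprime := Nat.prime_of_mem_primeFactors hp
    have hdvd : p - 1 ∣ n.totient := by
      rw [← Nat.totient_prime hprime]
      exact Nat.totient_dvd_of_dvd (Nat.dvd_of_mem_primeFactors hp)
    have hle := Nat.le_of_dvd (Nat.totient_pos.mpr (Nat.pos_of_ne_zero hsq.ne_zero)) hdvd
    have hp6 : p ≤ 6 := by lia
    interval_cases p <;> first | simp; done | exact absurd hprime (by decide)
  calc n = ∏ p ∈ n.primeFactors, p := (Nat.prod_primeFactors_of_squarefree hsq).symm
    _ ∣ ∏ p ∈ {2, 3, 5}, p := Finset.prod_dvd_prod_of_subset _ _ _ hsub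
    _ = 30 := by decide

theorem moebius_prime_mul_prime {p q : ℕ} (hp : p.Prime) (hq : q.Prime) (hpq : p ≠ q) :
    ArithmeticFunction.moebius (p * q) = 1 := by
  rw [ArithmeticFunction.isMultiplicative_moebius.map_mul_of_coprime
      ((Nat.coprime_primes hp hq).mpr hpq),
    ArithmeticFunction.moebius_apply_prime hp, ArithmeticFunction.moebius_apply_prime hq]
  rfl

theorem eq_two_or_three_or_five_of_moebius_eq_neg_one {n : ℕ}
    (hμ : ArithmeticFunction.moebius n = -1) (hφ : n.totient < 6) : n = 2 ∨ n = 3 ∨ n = 5 := by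
  have hsq : Squarefree n := ArithmeticFunction.moebius_ne_zero_iff_squarefree.mp (by simp [hμ])
  have hmem : n ∈ Nat.divisors 30 :=
    Nat.mem_divisors.mpr ⟨dvd_thirty_of_totient_lt_six hsq hφ, by norm_num⟩
  rw [show Nat.divisors 30 = {1, 2, 3, 5, 2 * 3, 2 * 5, 15, 30} by decide] at hmem
  simp only [Finset.mem_insert, Finset.mem_singleton] at hmem
  rcases hmem with rfl | rfl | rfl | rfl | rfl | rfl | rfl | rfl
  · simp at hμ
  · simp
  · simp
  · simp
  · simp [moebius_prime_mul_prime Nat.prime_two Nat.prime_three] at hμ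
  · simp [moebius_prime_mul_prime Nat.prime_two Nat.prime_five] at hμ
  · exact absurd hφ (by decide)
  · exact absurd hφ (by decide)

theorem eq_two_or_three_or_five_of_primitiveRootMean_lt {n : ℕ}
    (h : primitiveRootMean n < -1 / 6) : n = 2 ∨ n = 3 ∨ n = 5 := by
  have hμ : ArithmeticFunction.moebius n = -1 := by
    by_contra hne
    have hμ_nonneg : 0 ≤ ArithmeticFunction.moebius n := by
      have := ArithmeticFunction.moebius_eq_or n
      lia
    have : 0 ≤ primitiveRootMean n := div_nonneg (mod_cast hμ_nonneg) (Nat.cast_nonneg _)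
    linarith
  refine eq_two_or_three_or_five_of_moebius_eq_neg_one hμ ?_
  by_contra! hφ
  have hφ' : (6 : ℚ) ≤ n.totient := mod_cast hφ
  rw [primitiveRootMean, hμ, div_lt_iff₀ (by linarith)] at h
  push_cast at h
  linarith

theorem eq_two_or_three_three_or_three_five_of_sum_primitiveRootMean {a b c : ℕ}
    (hab : primitiveRootMean a ≤ primitiveRootMean b)
    (hbc : primitiveRootMean b ≤ primitiveRootMean c)
    (hsum : primitiveRootMean a + primitiveRootMean b + primitiveRootMean c = -1) :
    a = 2 ∨ a = 3 ∧ b = 3 ∨ a = 3 ∧ b = 5 := by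
  have mean_two : primitiveRootMean 2 = -1 := by
    norm_num [primitiveRootMean_prime Nat.prime_two]
  have mean_three : primitiveRootMean 3 = -1 / 2 := by
    norm_num [primitiveRootMean_prime Nat.prime_three]
  have mean_five : primitiveRootMean 5 = -1 / 4 := by
    norm_num [primitiveRootMean_prime Nat.prime_five]
  rcases eq_two_or_three_or_five_of_primitiveRootMean_lt (n := a) (by linarith)
    with rfl | rfl | rfl
  · exact Or.inl rfl
  · rcases eq_two_or_three_or_five_of_primitiveRootMean_lt (n := b) (by linarith)
      with rfl | rfl | rfl
    · linarith
    · simp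
    · simp
  · linarith

theorem re_pow_sub_of_pow_eq_one {z : ℂ} {n k : ℕ} (hz : z ^ n = 1) (hkn : k ≤ n) :
    (z ^ (n - k)).re = (z ^ k).re := by
  rcases eq_or_ne n 0 with rfl | hn
  · rw [Nat.le_zero.mp hkn]
  have hnorm : ‖z ^ k‖ = 1 := by rw [norm_pow, norm_eq_one_of_pow_eq_one hz hn, one_pow]
  have hinv : z ^ (n - k) = (z ^ k)⁻¹ :=
    eq_inv_of_mul_eq_one_left (by rw [← pow_add, Nat.sub_add_cancel hkn, hz])
  rw [hinv, inv_eq_conj hnorm, conj_re]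

theorem re_of_isPrimitiveRoot_three {z : ℂ} (hz : IsPrimitiveRoot z 3) : z.re = -1 / 2 := by
  have hsum := congrArg re (hz.geom_sum_eq_zero (by norm_num))
  have hre : (z ^ 2).re = (z ^ 1).re :=
    re_pow_sub_of_pow_eq_one (k := 1) hz.pow_eq_one (by norm_num)
  simp only [Finset.sum_range_succ, Finset.sum_range_zero, add_re, zero_re, pow_zero, one_re,
    pow_one, hre] at hsum
  linarith

theorem re_add_re_sq_of_isPrimitiveRoot_five {z : ℂ} (hz : IsPrimitiveRoot z 5) :
    z.re + (z ^ 2).re = -1 / 2 := by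
  have hsum := congrArg re (hz.geom_sum_eq_zero (by norm_num))
  have hre3 : (z ^ 3).re = (z ^ 2).re :=
    re_pow_sub_of_pow_eq_one (k := 2) hz.pow_eq_one (by norm_num)
  have hre4 : (z ^ 4).re = (z ^ 1).re :=
    re_pow_sub_of_pow_eq_one (k := 1) hz.pow_eq_one (by norm_num)
  simp only [Finset.sum_range_succ, Finset.sum_range_zero, add_re, zero_re, pow_zero, one_re,
    pow_one, hre3, hre4] at hsum
  linarith

theorem re_sq_of_norm_eq_one {z : ℂ} (hz : ‖z‖ = 1) : (z ^ 2).re = 2 * z.re ^ 2 - 1 := by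
  have hcircle : z.re * z.re + z.im * z.im = 1 := by
    rw [← normSq_apply, normSq_eq_norm_sq, hz, one_pow]
  rw [sq, mul_re]
  linarith

theorem re_eq_or_eq_re_sq_of_isPrimitiveRoot_five {z w : ℂ} (hz : IsPrimitiveRoot z 5)
    (hw : IsPrimitiveRoot w 5) : z.re = w.re ∨ z.re = (w ^ 2).re := by
  have quadratic {v : ℂ} (hv : IsPrimitiveRoot v 5) : 2 * v.re ^ 2 + v.re = 1 / 2 := by
    have := re_add_re_sq_of_isPrimitiveRoot_five hv
    rw [re_sq_of_norm_eq_one (norm_eq_one_of_pow_eq_one hv.pow_eq_one (by norm_num))] at this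
    linarith
  have hsq : (w ^ 2).re = -1 / 2 - w.re :=
    eq_sub_of_add_eq' (re_add_re_sq_of_isPrimitiveRoot_five hw)
  have hfactor : (z.re - w.re) * (z.re - (w ^ 2).re) = 0 := by
    rw [hsq]
    linear_combination (quadratic hz - quadratic hw) / 2
  exact (mul_eq_zero.mp hfactor).imp sub_eq_zero.mp sub_eq_zero.mp

theorem eq_or_conj_eq_of_re_eq {z w : ℂ} (hnorm : ‖z‖ = ‖w‖) (hre : z.re = w.re) :
    z = w ∨ (starRingEnd ℂ) z = w := by
  have him : z.im ^ 2 = w.im ^ 2 := by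
    have := congrArg (· ^ 2) hnorm
    simp only [← normSq_eq_norm_sq, normSq_apply, hre] at this
    linarith
  rcases sq_eq_sq_iff_eq_or_eq_neg.mp him with h | h
  · exact Or.inl (Complex.ext hre h)
  · exact Or.inr (Complex.ext hre (by rw [conj_im, h, neg_neg]))

/-- The families `z` and `v` of complex numbers agree up to a permutation of the indices and
complex conjugation of some of the entries; `c` marks the entries to be conjugated. -/
def EqUpToPermConj {ι : Type*} (z v : ι → ℂ) : Prop :=
  ∃ (e : Equiv.Perm ι) (c : ι → Bool),
    (fun i ↦ if c i then (starRingEnd ℂ) (z (e i)) else z (e i)) = v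

namespace EqUpToPermConj

variable {ι : Type*} {z v : ι → ℂ}

theorem of_re_eq (e : Equiv.Perm ι) (hnorm : ∀ i, ‖z (e i)‖ = ‖v i‖)
    (hre : ∀ i, (z (e i)).re = (v i).re) : EqUpToPermConj z v := by
  have hchoice (i : ι) :
      ∃ c : Bool, (if c then (starRingEnd ℂ) (z (e i)) else z (e i)) = v i := by
    rcases eq_or_conj_eq_of_re_eq (hnorm i) (hre i) with h | h
    · exact ⟨false, by simpa using h⟩
    · exact ⟨true, by simpa using h⟩
  choose c hc using hchoice
  exact ⟨e, c, funext hc⟩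

theorem of_comp_perm {σ : Equiv.Perm ι} (h : EqUpToPermConj (z ∘ σ) v) : EqUpToPermConj z v := by
  obtain ⟨e, c, h⟩ := h
  exact ⟨e.trans σ, c, h⟩

end EqUpToPermConj

theorem isPrimitiveRoot_ω : IsPrimitiveRoot ω 3 := by
  simpa [ω] using isPrimitiveRoot_exp 3 (by norm_num)

theorem isPrimitiveRoot_β : IsPrimitiveRoot β 5 := by
  simpa [β] using isPrimitiveRoot_exp 5 (by norm_num)

theorem norm_ω : ‖ω‖ = 1 := isPrimitiveRoot_ω.norm'_eq_one (by norm_num)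

theorem norm_β : ‖β‖ = 1 := isPrimitiveRoot_β.norm'_eq_one (by norm_num)

theorem eqUpToPermConj_neg_one {z : Fin 3 → ℂ} (hnorm : ∀ i, ‖z i‖ = 1)
    (hsum : (z 0).re + (z 1).re + (z 2).re = -1)
    (h0 : IsPrimitiveRoot (z 0) 2) :
    EqUpToPermConj z ![-1, z 1, -z 1] := by
  have hre0 : (z 0).re = -1 := by rw [h0.eq_neg_one_of_two_right, neg_re, one_re]
  have hre2 : (z 2).re = -(z 1).re := by linarith
  refine .of_re_eq 1 ?_ ?_ <;> simp [Fin.forall_fin_succ, hnorm, hre0, hre2]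

theorem eqUpToPermConj_I_ω_ω {z : Fin 3 → ℂ} (hnorm : ∀ i, ‖z i‖ = 1)
    (hsum : (z 0).re + (z 1).re + (z 2).re = -1)
    (h0 : IsPrimitiveRoot (z 0) 3) (h1 : IsPrimitiveRoot (z 1) 3) :
    EqUpToPermConj z ![I, ω, ω] := by
  have hω := re_of_isPrimitiveRoot_three isPrimitiveRoot_ω
  have hre0 := re_of_isPrimitiveRoot_three h0
  have hre1 := re_of_isPrimitiveRoot_three h1
  have hre2 : (z 2).re = 0 := by linarith
  refine .of_re_eq (Equiv.swap 0 2) ?_ ?_ <;>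
    simp [Fin.forall_fin_succ, Equiv.swap_apply_of_ne_of_ne, hnorm, norm_ω, hω, hre0, hre1, hre2]

theorem eqUpToPermConj_ω_β_β_sq {z : Fin 3 → ℂ} (hnorm : ∀ i, ‖z i‖ = 1)
    (hsum : (z 0).re + (z 1).re + (z 2).re = -1)
    (h0 : IsPrimitiveRoot (z 0) 3) (h1 : IsPrimitiveRoot (z 1) 5) :
    EqUpToPermConj z ![ω, β, β ^ 2] := by
  have hω := re_of_isPrimitiveRoot_three isPrimitiveRoot_ω
  have hβ := re_add_re_sq_of_isPrimitiveRoot_five isPrimitiveRoot_β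
  have hre0 := re_of_isPrimitiveRoot_three h0
  rcases re_eq_or_eq_re_sq_of_isPrimitiveRoot_five h1 isPrimitiveRoot_β with hre1 | hre1
  · have hre2 : (z 2).re = (β ^ 2).re := by linarith
    refine .of_re_eq 1 ?_ ?_ <;>
      simp [Fin.forall_fin_succ, hnorm, norm_ω, norm_β, hω, hre0, hre1, hre2]
  · have hre2 : (z 2).re = β.re := by linarith
    refine .of_re_eq (Equiv.swap 1 2) ?_ ?_ <;>
      simp [Fin.forall_fin_succ, Equiv.swap_apply_of_ne_of_ne, hnorm, norm_ω, norm_β, hω,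
        hre0, hre1, hre2]

theorem exists_perm_isPrimitiveRoot_of_sum_re_eq_neg_one {z : Fin 3 → ℂ}
    (hz : ∀ i, IsOfFinOrder (z i)) (hsum : ∑ i, (z i).re = -1) :
    ∃ σ : Equiv.Perm (Fin 3), IsPrimitiveRoot (z (σ 0)) 2 ∨
      IsPrimitiveRoot (z (σ 0)) 3 ∧ IsPrimitiveRoot (z (σ 1)) 3 ∨
      IsPrimitiveRoot (z (σ 0)) 3 ∧ IsPrimitiveRoot (z (σ 1)) 5 := by
  let mean (i : Fin 3) : ℚ := primitiveRootMean (orderOf (z i))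
  have hmean : ∑ i, mean i = -1 :=
    sum_primitiveRootMean_orderOf_eq (fun i _ ↦ hz i) (by simpa using hsum)
  let σ : Equiv.Perm (Fin 3) := Tuple.sort mean
  have hmono : Monotone (mean ∘ σ) := Tuple.monotone_sort mean
  rw [← Equiv.sum_comp σ, Fin.sum_univ_three] at hmean
  have horder := eq_two_or_three_three_or_three_five_of_sum_primitiveRootMean
    (hmono (by decide : (0 : Fin 3) ≤ 1)) (hmono (by decide : (1 : Fin 3) ≤ 2)) hmean
  simp only [← IsPrimitiveRoot.iff_orderOf] at horder
  exact ⟨σ, horder⟩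

theorem stmt0 (l : Fin 3 → ℂ) (hl : ∀ i, IsRootOfUnity (l i))
    (hsum : (∑ i, (l i + (starRingEnd ℂ) (l i))) + 2 = 0) :
    ∃ (e : Equiv.Perm (Fin 3)) (c : Fin 3 → Bool),
      ((fun i => if c i then (starRingEnd ℂ) (l (e i)) else l (e i)) = ![Complex.I, ω, ω] ∨
       (fun i => if c i then (starRingEnd ℂ) (l (e i)) else l (e i)) = ![ω, β, β ^ 2] ∨
       ∃ μ : ℂ, IsRootOfUnity μ ∧
         (fun i => if c i then (starRingEnd ℂ) (l (e i)) else l (e i)) = ![(-1 : ℂ), μ, -μ]) := by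
  have hfin (i : Fin 3) : IsOfFinOrder (l i) := isOfFinOrder_iff_pow_eq_one.mpr (hl i)
  have hre : ∑ i, (l i).re = -1 := by
    have := congrArg re hsum
    simp only [add_re, re_sum, conj_re, Finset.sum_add_distrib, re_ofNat, zero_re] at this
    linarith
  obtain ⟨σ, hσ⟩ := exists_perm_isPrimitiveRoot_of_sum_re_eq_neg_one hfin hre
  rw [← Equiv.sum_comp σ, Fin.sum_univ_three] at hre
  have hnorm (i : Fin 3) : ‖(l ∘ σ) i‖ = 1 := (hfin (σ i)).norm_eq_one
  rcases hσ with h0 | ⟨h0, h1⟩ | ⟨h0, h1⟩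
  · obtain ⟨e, c, h⟩ := (eqUpToPermConj_neg_one hnorm hre h0).of_comp_perm
    exact ⟨e, c, .inr (.inr ⟨l (σ 1), hl (σ 1), h⟩)⟩
  · obtain ⟨e, c, h⟩ := (eqUpToPermConj_I_ω_ω hnorm hre h0 h1).of_comp_perm
    exact ⟨e, c, .inl h⟩
  · obtain ⟨e, c, h⟩ := (eqUpToPermConj_ω_β_β_sq hnorm hre h0 h1).of_comp_perm
    exact ⟨e, c, .inr (.inl h)⟩
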